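/- arXiv:1902.02555 — 3 statements merged into one kernel-verified Lean document; each statement's English description precedes it below -/
import Mathlib

section
/- Let m ≥ 2k-1. If (H_n) is a finitely supported family of spherical harmonics indexed by families n = (n_ij)_{1 ≤ i ≤ j ≤ k} of nonnegative integers and Σ_n r^{2n} H_n = 0, then H_n = 0 for every n. That is, in the semistable range the sum Σ_n r^{2n} ℋ in 𝒫 is direct (uniqueness part of Theorem A). -/
open MvPolynomial

/-- The mixed Laplacian `Δ_ij = Σ_s ∂_{x^i_s} ∂_{x^j_s}` on polynomials in `k` vector
variables of `ℝ^m`. -/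
noncomputable def mixedLap (k m : ℕ) (i j : Fin k)
    (P : MvPolynomial (Fin k × Fin m) ℂ) : MvPolynomial (Fin k × Fin m) ℂ :=
  ∑ s : Fin m, pderiv (i, s) (pderiv (j, s) P)

/-- The polynomial `r²_ij = Σ_s x^i_s x^j_s`. -/
noncomputable def r2 (k m : ℕ) (i j : Fin k) : MvPolynomial (Fin k × Fin m) ℂ :=
  ∑ s : Fin m, X (i, s) * X (j, s)

/-- `H` is a spherical harmonic if `Δ_ij H = 0` for all `i ≤ j`. -/
def IsSphericalHarmonic (k m : ℕ) (H : MvPolynomial (Fin k × Fin m) ℂ) : Prop :=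
  ∀ i j : Fin k, i ≤ j → mixedLap k m i j H = 0

/-- For a family `n = (n_ij)_{i ≤ j}` of nonnegative integers, the polynomial
`r^{2n} = ∏_{i ≤ j} (r²_ij)^{n_ij}`. -/
noncomputable def r2pow (k m : ℕ) (n : {p : Fin k × Fin k // p.1 ≤ p.2} → ℕ) :
    MvPolynomial (Fin k × Fin m) ℂ :=
  ∏ p : {p : Fin k × Fin k // p.1 ≤ p.2}, (r2 k m p.1.1 p.1.2) ^ (n p)

/-!
The Fischer pairing makes `Δ_ij` adjoint to multiplication by `r²_ij`, and its positivity shows that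
a spherical harmonic lying in the ideal of the `r²_ij` is zero. So it is enough to show that in a
relation `Σ_n r^{2n} G_n = 0` the coefficient at each minimal index `n` of the support lies in that
ideal. This is clear when the `r²_ij` are replaced by pairwise coprime monomials. It also holds
when they are replaced by monic polynomials `Q_ij` with pairwise coprime leading monomials, because
the linear map writing `Q_ij` in place of its leading monomial is unitriangular, hence bijective.

The `r²_ij` do not have coprime leading monomials themselves, but over `ℂ` a linear change of
variables turns `r²_ij` into `Σ_s x^i_s x^j_{τ s}` for any involution `τ` of the columns. Let `τ`
reverse the first `2k - 1` columns, numbered from `0`. A weight that is strictly concave in `s + 2i`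
singles out the leading monomial `x^i_{k-1+(j-i)} x^j_{k-1-(j-i)}` for `i ≤ j`; these monomials are
pairwise coprime, and they fit into `m` columns exactly when `m ≥ 2k - 1`.
-/

section Fischer

variable {σ R 𝕜 : Type*} [CommSemiring R] [RCLike 𝕜]

/-- The factorial `a! = ∏ x, (a x)!` of a multi-index. -/
def multiFactorial (a : σ →₀ ℕ) : ℕ :=
  a.prod fun _ n => n.factorial

theorem multiFactorial_pos (a : σ →₀ ℕ) : 0 < multiFactorial a :=
  Finset.prod_pos fun _ _ => Nat.factorial_pos _

theorem multiFactorial_add_single_one (a : σ →₀ ℕ) (x : σ) :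
    multiFactorial (a + Finsupp.single x 1) = (a x + 1) * multiFactorial a := by
  have split (b : σ →₀ ℕ) : multiFactorial b = (b x).factorial * multiFactorial (b.erase x) :=
    (Finsupp.mul_prod_erase' b x _ fun _ => Nat.factorial_zero).symm
  rw [split, split a, ← mul_assoc]
  simp [Finsupp.erase_add, Nat.factorial_succ]

/-- The Fischer pairing `⟨P, Q⟩ = (P(∂) Q)(0)`, taken bilinear rather than sesquilinear; monomials
are orthogonal and `⟨x^a, x^a⟩ = a!`. -/
noncomputable def fischer : MvPolynomial σ R →ₗ[R] MvPolynomial σ R →ₗ[R] R :=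
  (basisMonomials σ R).constr R fun a => (multiFactorial a : R) • lcoeff R a

theorem fischer_monomial (a : σ →₀ ℕ) (c : R) (Q : MvPolynomial σ R) :
    fischer (monomial a c) Q = c * (multiFactorial a * coeff a Q) := by
  have hc : monomial a c = c • basisMonomials σ R a := by simp [smul_monomial]
  rw [hc, map_smul, fischer, Module.Basis.constr_basis]
  rfl

theorem fischer_X_mul (x : σ) (P Q : MvPolynomial σ R) :
    fischer (X x * P) Q = fischer P (pderiv x Q) := by
  induction P using MvPolynomial.induction_on' with
  | monomial a c =>
    rw [X, monomial_mul, fischer_monomial, fischer_monomial, add_comm,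
      multiFactorial_add_single_one, coeff_pderiv]
    push_cast
    ring
  | add p q hp hq => simp only [mul_add, map_add, LinearMap.add_apply, hp, hq]

theorem fischer_map_conj_self (P : MvPolynomial σ 𝕜) :
    fischer P (map (starRingEnd 𝕜) P) =
      ((∑ a ∈ P.support, multiFactorial a * ‖coeff a P‖ ^ 2 : ℝ) : 𝕜) := by
  conv_lhs => enter [1]; rw [P.as_sum]
  rw [map_sum, LinearMap.sum_apply]
  push_cast
  refine Finset.sum_congr rfl fun a _ => ?_
  rw [fischer_monomial, coeff_map, ← RCLike.mul_conj]
  ring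

theorem eq_zero_of_fischer_map_conj_self {P : MvPolynomial σ 𝕜}
    (h : fischer P (map (starRingEnd 𝕜) P) = 0) : P = 0 := by
  rw [fischer_map_conj_self, RCLike.ofReal_eq_zero,
    Finset.sum_eq_zero_iff_of_nonneg fun _ _ => by positivity] at h
  rw [← support_eq_empty, Finset.eq_empty_iff_forall_notMem]
  intro a ha
  have hfact : (multiFactorial a : ℝ) ≠ 0 := mod_cast (multiFactorial_pos a).ne'
  exact mem_support_iff.1 ha (by simpa [hfact] using h a ha)

theorem eq_zero_of_mem_span_of_fischer_mul_eq_zero {E : Type*} [Finite E]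
    {Q : E → MvPolynomial σ 𝕜} {H : MvPolynomial σ 𝕜} (hH : H ∈ Ideal.span (Set.range Q))
    (horth : ∀ P e, fischer (P * Q e) (map (starRingEnd 𝕜) H) = 0) : H = 0 := by
  cases nonempty_fintype E
  obtain ⟨c, hc⟩ := Ideal.mem_span_range_iff_exists_fun.1 hH
  apply eq_zero_of_fischer_map_conj_self
  nth_rw 1 [← hc]
  rw [map_sum, LinearMap.sum_apply]
  exact Finset.sum_eq_zero fun e _ => horth (c e) e

end Fischer

section SphericalHarmonic

variable {k m : ℕ}

theorem fischer_mul_r2 (i j : Fin k) (P Q : MvPolynomial (Fin k × Fin m) ℂ) :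
    fischer (P * r2 k m i j) Q = fischer P (mixedLap k m i j Q) := by
  rw [r2, mixedLap, Finset.mul_sum, map_sum, map_sum, LinearMap.sum_apply]
  refine Finset.sum_congr rfl fun s _ => ?_
  rw [← fischer_X_mul, ← fischer_X_mul]
  congr 2
  ring

theorem IsSphericalHarmonic.map_conj {H : MvPolynomial (Fin k × Fin m) ℂ}
    (hH : IsSphericalHarmonic k m H) : IsSphericalHarmonic k m (map (starRingEnd ℂ) H) := by
  intro i j hij
  simpa [mixedLap, pderiv_map] using congrArg (map (starRingEnd ℂ)) (hH i j hij)

theorem IsSphericalHarmonic.eq_zero_of_mem_span {H : MvPolynomial (Fin k × Fin m) ℂ}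
    (hH : IsSphericalHarmonic k m H)
    (hmem : H ∈ Ideal.span (Set.range
      fun p : {p : Fin k × Fin k // p.1 ≤ p.2} => r2 k m p.1.1 p.1.2)) : H = 0 :=
  eq_zero_of_mem_span_of_fischer_mul_eq_zero hmem fun P p => by
    rw [fischer_mul_r2, hH.map_conj _ _ p.2, map_zero]

end SphericalHarmonic

section QuasiRegular

variable {E A B : Type*} [Fintype E] [CommSemiring A] [CommSemiring B]

/-- A form of quasi-regularity of a family `Q`: in a relation `Σ_n Q^n G_n = 0`, every coefficient
`G_n` preceded only by zero coefficients, in the product order on exponents, lies in the ideal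
generated by `Q`. It is what makes expansions in powers of `Q` unique modulo this ideal. -/
def IsQuasiRegularFamily (Q : E → A) : Prop :=
  ∀ G : (E → ℕ) →₀ A, (G.sum fun n g => (∏ e, Q e ^ n e) * g) = 0 →
    ∀ n, (∀ n' < n, G n' = 0) → G n ∈ Ideal.span (Set.range Q)

theorem IsQuasiRegularFamily.eq_zero_of_sum_eq_zero {Q : E → A} (hQ : IsQuasiRegularFamily Q)
    {V : Set A} (hV : ∀ f ∈ V, f ∈ Ideal.span (Set.range Q) → f = 0) {G : (E → ℕ) →₀ A}
    (hG : ∀ n, G n ∈ V) (hsum : (G.sum fun n g => (∏ e, Q e ^ n e) * g) = 0) (n : E → ℕ) :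
    G n = 0 := by
  induction n using WellFoundedLT.induction with
  | ind n ih => exact hV _ (hG n) (hQ G hsum n ih)

theorem map_prod_pow_mul {P : E → A} {Q : E → B} {T : A → B}
    (hT : ∀ e f, T (P e * f) = Q e * T f) (n : E → ℕ) (f : A) :
    T ((∏ e, P e ^ n e) * f) = (∏ e, Q e ^ n e) * T f := by
  classical
  have map_pow_mul (e : E) (d : ℕ) (f : A) : T (P e ^ d * f) = Q e ^ d * T f := by
    induction d with
    | zero => simp
    | succ d ih => rw [pow_succ', pow_succ', mul_assoc, hT, ih, mul_assoc]
  suffices ∀ s : Finset E, T ((∏ e ∈ s, P e ^ n e) * f) = (∏ e ∈ s, Q e ^ n e) * T f from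
    this Finset.univ
  intro s
  induction s using Finset.induction_on with
  | empty => simp
  | insert e s he ih =>
    rw [Finset.prod_insert he, Finset.prod_insert he, mul_assoc, map_pow_mul, ih, mul_assoc]

theorem IsQuasiRegularFamily.of_addEquiv {P : E → A} {Q : E → B} (hP : IsQuasiRegularFamily P)
    (T : A ≃+ B) (hT : ∀ e f, T (P e * f) = Q e * T f) : IsQuasiRegularFamily Q := by
  intro G hsum n hmin
  have pullback_sum :
      ((G.mapRange T.symm (map_zero _)).sum fun n g => (∏ e, P e ^ n e) * g) = 0 := by
    apply T.injective
    rw [Finsupp.sum_mapRange_index (by simp), map_finsuppSum, map_zero, ← hsum]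
    simp only [map_prod_pow_mul hT, AddEquiv.apply_symm_apply]
  have pullback_mem : T.symm (G n) ∈ Ideal.span (Set.range P) := by
    simpa using hP _ pullback_sum n fun n' hn' => by simp [hmin n' hn']
  obtain ⟨c, hc⟩ := Ideal.mem_span_range_iff_exists_fun.1 pullback_mem
  refine Ideal.mem_span_range_iff_exists_fun.2 ⟨fun e => T (c e), ?_⟩
  rw [← T.apply_symm_apply (G n), ← hc, map_sum]
  simp only [mul_comm _ (P _), mul_comm _ (Q _), hT]

end QuasiRegular

section MonomialFamily

variable {σ E R : Type*} [Fintype E] [CommSemiring R] {μ : E → σ →₀ ℕ}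

theorem sum_smul_apply_of_mem_support (hμ : Pairwise (Function.onFun Disjoint μ))
    (n : E → ℕ) {e : E} {x : σ} (hx : x ∈ (μ e).support) :
    (∑ e', n e' • μ e') x = n e * μ e x := by
  rw [Finsupp.finsetSum_apply, Finset.sum_eq_single e]
  · simp
  · intro e' _ hne
    simp [Finsupp.notMem_support_iff.1 (Finset.disjoint_left.1
      (Finsupp.disjoint_iff.1 (hμ hne.symm)) hx)]
  · simp

theorem smul_le_add_sum_smul_iff (hμ : Pairwise (Function.onFun Disjoint μ))
    (n : E → ℕ) (e : E) (d : ℕ) (a : σ →₀ ℕ) :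
    d • μ e ≤ a + ∑ e', n e' • μ e' ↔ (d - n e) • μ e ≤ a := by
  refine forall_congr' fun x => ?_
  by_cases hx : x ∈ (μ e).support
  · simp only [Finsupp.add_apply, sum_smul_apply_of_mem_support hμ n hx, Finsupp.smul_apply,
      smul_eq_mul, Nat.sub_mul, tsub_le_iff_right]
  · simp [Finsupp.notMem_support_iff.1 hx]

theorem sum_smul_le (hμ : Pairwise (Function.onFun Disjoint μ))
    {n : E → ℕ} {a : σ →₀ ℕ} (hn : ∀ e, n e • μ e ≤ a) : ∑ e, n e • μ e ≤ a := by
  intro x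
  by_cases hx : ∃ e, x ∈ (μ e).support
  · obtain ⟨e, hx⟩ := hx
    simpa [sum_smul_apply_of_mem_support hμ n hx] using hn e x
  · push Not at hx
    simp [Finsupp.finsetSum_apply, fun e => Finsupp.notMem_support_iff.1 (hx e)]

theorem prod_monomial_pow (n : E → ℕ) :
    ∏ e, (monomial (μ e) (1 : R)) ^ n e = monomial (∑ e, n e • μ e) 1 := by
  simp [monomial_pow, monomial_sum_index]

theorem isQuasiRegularFamily_monomial (hμ : Pairwise (Function.onFun Disjoint μ)) :
    IsQuasiRegularFamily fun e => monomial (μ e) (1 : R) := by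
  intro G hsum n hmin
  rw [← Function.comp_def (fun a => monomial a (1 : R)), Set.range_comp,
    mem_ideal_span_monomial_image]
  by_contra! ⟨b, hb, hbμ⟩
  -- As no `x^(μ e)` divides `x^b`, the monomial `x^b x^(Σ_e n_e μ_e)` can be a multiple of
  -- `x^(Σ_e n'_e μ_e)` only for `n' ≤ n`.
  have hcoeff := congrArg (coeff (∑ e, n e • μ e + b)) hsum
  simp only [prod_monomial_pow, Finsupp.sum, coeff_sum, coeff_zero] at hcoeff
  rw [Finset.sum_eq_single n, coeff_monomial_mul, one_mul] at hcoeff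
  · exact mem_support_iff.1 hb hcoeff
  · intro n' _ hne
    rw [coeff_monomial_mul', one_mul, ite_eq_right_iff]
    intro hle
    have hn' : n' ≤ n := by
      intro e
      by_contra! hlt
      have hdvd : n' e • μ e ≤ b + ∑ e, n e • μ e :=
        (Finset.single_le_sum_of_canonicallyOrdered (f := fun e => n' e • μ e)
          (Finset.mem_univ e)).trans (hle.trans_eq (add_comm _ _))
      rw [smul_le_add_sum_smul_iff hμ] at hdvd
      exact hbμ _ ⟨e, rfl⟩ ((le_self_nsmul zero_le (tsub_pos_of_lt hlt).ne').trans hdvd)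
    rw [hmin n' (lt_of_le_of_ne hn' hne), coeff_zero]
  · intro hn
    rw [Finsupp.notMem_support_iff.1 hn, mul_zero, coeff_zero]

end MonomialFamily

section WeightFiltration

variable {σ R : Type*} [CommSemiring R] (w : σ → ℕ)

variable (R) in
/-- The polynomials all of whose monomials have `w`-weight less than `N`. -/
noncomputable def weightLT (N : ℕ) : Submodule R (MvPolynomial σ R) :=
  restrictSupport R {a | Finsupp.weight w a < N}

variable {w} in
theorem weightLT_mono {M N : ℕ} (h : M ≤ N) : weightLT R w M ≤ weightLT R w N :=
  restrictSupport_mono _ fun _ ha => lt_of_lt_of_le ha h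

theorem monomial_mem_weightLT {a : σ →₀ ℕ} {N : ℕ} (h : Finsupp.weight w a < N) (r : R) :
    monomial a r ∈ weightLT R w N :=
  (monomial_mem_restrictSupport R).2 (.inl h)

variable {w} in
open scoped Pointwise in
theorem mul_mem_weightLT {M N : ℕ} {P Q : MvPolynomial σ R} (hP : P ∈ weightLT R w M)
    (hQ : Q ∈ weightLT R w (N + 1)) : P * Q ∈ weightLT R w (M + N) := by
  have hPQ := Submodule.mul_mem_mul hP hQ
  rw [weightLT, weightLT, ← restrictSupport_add] at hPQ
  refine restrictSupport_mono _ (Set.add_subset_iff.2 fun a ha b hb => ?_) hPQ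
  rw [Set.mem_ofPred_eq] at ha hb ⊢
  rw [map_add]
  omega

theorem exists_mem_weightLT (f : MvPolynomial σ R) : ∃ N, f ∈ weightLT R w N :=
  ⟨f.support.sup (Finsupp.weight w) + 1, (mem_restrictSupport_iff R).2 fun _ ha =>
    Nat.lt_succ_of_le (Finset.le_sup (f := Finsupp.weight w) ha)⟩

theorem weightLT_zero : weightLT R w 0 = ⊥ := by
  simp [weightLT, restrictSupport_eq_span]

end WeightFiltration

section LeadingMonomial

variable {σ R : Type*} [CommRing R] (w : σ → ℕ)

/-- `P` is monic with leading monomial `x^a` for the weight `w`: it is `x^a` plus terms of strictly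
smaller weight. No tie-breaking order is chosen, so `P` may have no leading monomial. -/
def HasLeadingMonomial (P : MvPolynomial σ R) (a : σ →₀ ℕ) : Prop :=
  P - monomial a 1 ∈ weightLT R w (Finsupp.weight w a)

namespace HasLeadingMonomial

theorem monomial (a : σ →₀ ℕ) : HasLeadingMonomial w (monomial a (1 : R)) a := by
  simp [HasLeadingMonomial]

theorem one : HasLeadingMonomial w (1 : MvPolynomial σ R) 0 :=
  monomial w 0

variable {w} {P Q : MvPolynomial σ R} {a b : σ →₀ ℕ}

theorem mem_weightLT_succ (hP : HasLeadingMonomial w P a) :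
    P ∈ weightLT R w (Finsupp.weight w a + 1) := by
  rw [← sub_add_cancel P (MvPolynomial.monomial a 1)]
  exact add_mem (weightLT_mono (Nat.le_succ _) hP) (monomial_mem_weightLT w (Nat.lt_succ_self _) 1)

theorem mul (hP : HasLeadingMonomial w P a) (hQ : HasLeadingMonomial w Q b) :
    HasLeadingMonomial w (P * Q) (a + b) := by
  have hsplit : P * Q - MvPolynomial.monomial (a + b) 1 =
      (Q - MvPolynomial.monomial b 1) * P +
        (P - MvPolynomial.monomial a 1) * MvPolynomial.monomial b 1 := by
    rw [← one_mul (1 : R), ← monomial_mul, one_mul]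
    ring
  rw [HasLeadingMonomial, hsplit, map_add]
  refine add_mem ?_ (mul_mem_weightLT hP (monomial w b).mem_weightLT_succ)
  rw [add_comm (Finsupp.weight w a)]
  exact mul_mem_weightLT hQ hP.mem_weightLT_succ

theorem pow (hP : HasLeadingMonomial w P a) (n : ℕ) : HasLeadingMonomial w (P ^ n) (n • a) := by
  induction n with
  | zero => simpa using one w
  | succ n ih => rw [pow_succ, succ_nsmul]; exact ih.mul hP

theorem prod {E : Type*} {Q : E → MvPolynomial σ R} {μ : E → σ →₀ ℕ} (s : Finset E)
    (hQ : ∀ e ∈ s, HasLeadingMonomial w (Q e) (μ e)) :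
    HasLeadingMonomial w (∏ e ∈ s, Q e) (∑ e ∈ s, μ e) := by
  classical
  induction s using Finset.induction_on with
  | empty => exact one w
  | insert e s he ih =>
    rw [Finset.prod_insert he, Finset.sum_insert he]
    exact (hQ e (s.mem_insert_self e)).mul (ih fun e' he' => hQ e' (Finset.mem_insert_of_mem he'))

end HasLeadingMonomial

variable {w} {T : MvPolynomial σ R →ₗ[R] MvPolynomial σ R}

theorem map_sub_self_mem_weightLT (hT : ∀ a, HasLeadingMonomial w (T (monomial a 1)) a) {N : ℕ}
    {f : MvPolynomial σ R} (hf : f ∈ weightLT R w (N + 1)) : T f - f ∈ weightLT R w N := by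
  suffices weightLT R w (N + 1) ≤ (weightLT R w N).comap (T - LinearMap.id) from this hf
  rw [weightLT, restrictSupport_eq_span, Submodule.span_le]
  rintro _ ⟨a, ha, rfl⟩
  exact weightLT_mono (Nat.le_of_lt_succ ha) (hT a)

theorem injective_of_hasLeadingMonomial (hT : ∀ a, HasLeadingMonomial w (T (monomial a 1)) a) :
    Function.Injective T := by
  rw [injective_iff_map_eq_zero]
  intro f hTf
  obtain ⟨N, hf⟩ := exists_mem_weightLT w f
  induction N with
  | zero => simpa [weightLT_zero] using hf
  | succ N ih => exact ih (by simpa [hTf] using map_sub_self_mem_weightLT hT hf)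

theorem surjective_of_hasLeadingMonomial (hT : ∀ a, HasLeadingMonomial w (T (monomial a 1)) a) :
    Function.Surjective T := by
  intro f
  obtain ⟨N, hf⟩ := exists_mem_weightLT w f
  induction N generalizing f with
  | zero => exact ⟨0, by simpa [weightLT_zero, eq_comm] using hf⟩
  | succ N ih =>
    obtain ⟨g, hg⟩ := ih _ (map_sub_self_mem_weightLT hT hf)
    exact ⟨f - g, by rw [map_sub, hg, sub_sub_cancel]⟩

end LeadingMonomial

section LeadingTermReplacement

/-- The largest `d` with `d • ν ≤ a`, that is, the multiplicity of `x^ν` as a factor of `x^a`.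
It takes the junk value `0` if `ν = 0`. -/
noncomputable def factorMultiplicity {σ : Type*} (ν a : σ →₀ ℕ) : ℕ :=
  sSup {d | d • ν ≤ a}

theorem le_factorMultiplicity_iff {σ : Type*} {ν : σ →₀ ℕ} (hν : ν ≠ 0) (a : σ →₀ ℕ) (d : ℕ) :
    d ≤ factorMultiplicity ν a ↔ d • ν ≤ a := by
  obtain ⟨x, hx⟩ := Finsupp.ne_iff.1 hν
  have hbdd : BddAbove {d | d • ν ≤ a} :=
    ⟨a x, fun d hd => (Nat.le_mul_of_pos_right d (Nat.pos_of_ne_zero hx)).trans (hd x)⟩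
  have hmem : factorMultiplicity ν a • ν ≤ a := Nat.sSup_mem ⟨0, by simp⟩ hbdd
  exact ⟨fun h => (nsmul_le_nsmul_left zero_le h).trans hmem, fun h => le_csSup hbdd h⟩

variable {σ E R : Type*} [Fintype E] [CommSemiring R] (μ : E → σ →₀ ℕ) (Q : E → MvPolynomial σ R)

/-- The exponent of the monomial left when all factors `x^(μ e)` are removed from `x^a`. -/
noncomputable def residualExponent (a : σ →₀ ℕ) : σ →₀ ℕ :=
  a - ∑ e, factorMultiplicity (μ e) a • μ e

/-- The linear map replacing every factor `x^(μ e)` of a monomial by `Q e`. When `Q e` has leading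
monomial `x^(μ e)`, it is unitriangular and carries multiplication by the monomials `x^(μ e)` to
multiplication by the `Q e`. -/
noncomputable def replaceLeading : MvPolynomial σ R →ₗ[R] MvPolynomial σ R :=
  (basisMonomials σ R).constr R fun a =>
    (∏ e, Q e ^ factorMultiplicity (μ e) a) * monomial (residualExponent μ a) 1

theorem replaceLeading_monomial (a : σ →₀ ℕ) (r : R) :
    replaceLeading μ Q (monomial a r) =
      r • ((∏ e, Q e ^ factorMultiplicity (μ e) a) * monomial (residualExponent μ a) 1) := by
  rw [← mul_one r, ← smul_eq_mul, ← smul_monomial, map_smul, smul_eq_mul, mul_one]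
  exact congrArg (r • ·) ((basisMonomials σ R).constr_basis R _ a)

variable {μ} {Q}

theorem factorMultiplicity_add (hμ : Pairwise (Function.onFun Disjoint μ)) (hne : ∀ e, μ e ≠ 0)
    (n : E → ℕ) (e : E) (a : σ →₀ ℕ) :
    factorMultiplicity (μ e) (a + ∑ e', n e' • μ e') = factorMultiplicity (μ e) a + n e := by
  refine eq_of_forall_le_iff fun d => ?_
  rw [le_factorMultiplicity_iff (hne e), smul_le_add_sum_smul_iff hμ,
    ← le_factorMultiplicity_iff (hne e), tsub_le_iff_right]

theorem residualExponent_add (hμ : Pairwise (Function.onFun Disjoint μ)) (hne : ∀ e, μ e ≠ 0)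
    (n : E → ℕ) (a : σ →₀ ℕ) :
    residualExponent μ (a + ∑ e, n e • μ e) = residualExponent μ a := by
  simp only [residualExponent, factorMultiplicity_add hμ hne, add_smul, Finset.sum_add_distrib,
    add_tsub_add_eq_tsub_right]

theorem replaceLeading_monomial_mul (hμ : Pairwise (Function.onFun Disjoint μ))
    (hne : ∀ e, μ e ≠ 0) (e : E) (f : MvPolynomial σ R) :
    replaceLeading μ Q (monomial (μ e) 1 * f) = Q e * replaceLeading μ Q f := by
  classical
  induction f using MvPolynomial.induction_on' with
  | add p q hp hq => rw [mul_add, map_add, map_add, hp, hq, mul_add]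
  | monomial a r =>
    have hμe : μ e = ∑ e', (Pi.single e 1 : E → ℕ) e' • μ e' := by
      simp [Pi.single_apply, ite_smul]
    have hmult (e' : E) : factorMultiplicity (μ e') (a + μ e) =
        factorMultiplicity (μ e') a + (Pi.single e 1 : E → ℕ) e' := by
      rw [hμe, factorMultiplicity_add hμ hne]
    have hres : residualExponent μ (a + μ e) = residualExponent μ a := by
      rw [hμe, residualExponent_add hμ hne]
    have hprod : ∏ e', Q e' ^ (Pi.single e 1 : E → ℕ) e' = Q e := by
      simp [Pi.single_apply, pow_ite]
    rw [monomial_mul, one_mul, add_comm, replaceLeading_monomial, replaceLeading_monomial, hres]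
    simp only [hmult, pow_add, Finset.prod_mul_distrib, hprod]
    rw [mul_smul_comm, mul_comm _ (Q e), mul_assoc]

variable {S : Type*} [CommRing S] {P : E → MvPolynomial σ S} {w : σ → ℕ}

theorem hasLeadingMonomial_replaceLeading (hμ : Pairwise (Function.onFun Disjoint μ))
    (hne : ∀ e, μ e ≠ 0) (hP : ∀ e, HasLeadingMonomial w (P e) (μ e)) (a : σ →₀ ℕ) :
    HasLeadingMonomial w (replaceLeading μ P (monomial a 1)) a := by
  have hle : ∑ e, factorMultiplicity (μ e) a • μ e ≤ a :=
    sum_smul_le hμ fun e => (le_factorMultiplicity_iff (hne e) a _).1 le_rfl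
  have hlead := (HasLeadingMonomial.prod Finset.univ fun e _ =>
    (hP e).pow (factorMultiplicity (μ e) a)).mul (.monomial w (residualExponent μ a))
  rwa [residualExponent, add_tsub_cancel_of_le hle, ← residualExponent,
    ← one_smul S (_ * _), ← replaceLeading_monomial] at hlead

theorem isQuasiRegularFamily_of_hasLeadingMonomial
    (hμ : Pairwise (Function.onFun Disjoint μ)) (hne : ∀ e, μ e ≠ 0)
    (hP : ∀ e, HasLeadingMonomial w (P e) (μ e)) : IsQuasiRegularFamily P := by
  have hlead := hasLeadingMonomial_replaceLeading hμ hne hP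
  let T := LinearEquiv.ofBijective (replaceLeading μ P)
    ⟨injective_of_hasLeadingMonomial hlead, surjective_of_hasLeadingMonomial hlead⟩
  exact (isQuasiRegularFamily_monomial hμ).of_addEquiv T.toAddEquiv
    (replaceLeading_monomial_mul hμ hne)

end LeadingTermReplacement

section Twist

variable {κ ι R : Type*} [CommRing R] {τ : ι → ι} {α β : R}

/-- The substitution `x^i_s ↦ α x^i_s + β x^i_{τ s}`. If `α ^ 2 + β ^ 2 = 0` and `2 α β = 1`, it
turns the standard bilinear form on each pair of vector variables into the form permuted by `τ`. -/
noncomputable def twistHom (κ : Type*) (τ : ι → ι) (α β : R) :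
    MvPolynomial (κ × ι) R →ₐ[R] MvPolynomial (κ × ι) R :=
  aeval fun x => C α * X x + C β * X (x.1, τ x.2)

theorem twistHom_comp_twistHom (hτ : Function.Involutive τ) (hsq : α ^ 2 + β ^ 2 = 0)
    (hmul : 2 * (α * β) = 1) :
    (twistHom κ τ β α).comp (twistHom κ τ α β) = AlgHom.id R _ := by
  have hsqC := congrArg (C (σ := κ × ι)) hsq
  have hmulC := congrArg (C (σ := κ × ι)) hmul
  simp only [map_add, map_mul, map_pow, map_ofNat, map_zero, map_one] at hsqC hmulC
  ext1 x
  simp only [twistHom, AlgHom.comp_apply, AlgHom.id_apply, map_add, map_mul, aeval_X, algHom_C,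
    algebraMap_eq, hτ x.2]
  linear_combination X x * hmulC + X (x.1, τ x.2) * hsqC

/-- The substitution `twistHom κ τ α β` is invertible, with inverse `twistHom κ τ β α`. -/
noncomputable def twistEquiv (κ : Type*) (hτ : Function.Involutive τ) (hsq : α ^ 2 + β ^ 2 = 0)
    (hmul : 2 * (α * β) = 1) : MvPolynomial (κ × ι) R ≃ₐ[R] MvPolynomial (κ × ι) R :=
  .ofAlgHom (twistHom κ τ α β) (twistHom κ τ β α)
    (twistHom_comp_twistHom hτ (by rwa [add_comm]) (by rwa [mul_comm β]))
    (twistHom_comp_twistHom hτ hsq hmul)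

variable [Fintype ι]

variable (R) in
/-- The polynomial `Σ_s x^i_s x^j_{τ s}`. -/
noncomputable def twistedForm (τ : ι → ι) (i j : κ) : MvPolynomial (κ × ι) R :=
  ∑ s, X (i, s) * X (j, τ s)

theorem twistHom_sum_X_mul_X (hτ : Function.Involutive τ) (hsq : α ^ 2 + β ^ 2 = 0)
    (hmul : 2 * (α * β) = 1) (i j : κ) :
    twistHom κ τ α β (∑ s, X (i, s) * X (j, s)) = twistedForm R τ i j := by
  have sum_comp (f : ι → MvPolynomial (κ × ι) R) : ∑ s, f (τ s) = ∑ s, f s :=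
    Equiv.sum_comp hτ.toPerm f
  have hdiag : ∑ s, (X (i, τ s) * X (j, τ s) : MvPolynomial (κ × ι) R) =
      ∑ s, X (i, s) * X (j, s) :=
    sum_comp fun s => X (i, s) * X (j, s)
  have htwist : ∑ s, X (i, τ s) * X (j, s) = twistedForm R τ i j := by
    simpa only [twistedForm, hτ _] using sum_comp fun s => X (i, s) * X (j, τ s)
  have hsqC := congrArg (C (σ := κ × ι)) hsq
  have hmulC := congrArg (C (σ := κ × ι)) hmul
  simp only [map_add, map_mul, map_pow, map_ofNat, map_zero, map_one] at hsqC hmulC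
  calc twistHom κ τ α β (∑ s, X (i, s) * X (j, s))
      = C α ^ 2 * ∑ s, X (i, s) * X (j, s) + C β ^ 2 * ∑ s, X (i, τ s) * X (j, τ s) +
          C α * C β * (twistedForm R τ i j + ∑ s, X (i, τ s) * X (j, s)) := by
        simp only [twistHom, twistedForm, map_sum, map_mul, aeval_X, Finset.mul_sum,
          ← Finset.sum_add_distrib]
        exact Finset.sum_congr rfl fun s _ => by ring
    _ = twistedForm R τ i j := by
        rw [hdiag, htwist]
        linear_combination (∑ s, X (i, s) * X (j, s)) * hsqC + twistedForm R τ i j * hmulC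

end Twist

section ReflectedForm

theorem sq_add_sq_lt_sq_add_sq {a b c : ℕ} (h : 2 * c ≤ a + b) (hac : a ≠ c) :
    c ^ 2 + c ^ 2 < a ^ 2 + b ^ 2 := by
  have hpos : (0 : ℤ) < ((a : ℤ) - c) ^ 2 := pow_two_pos_of_ne_zero (by omega)
  zify at h ⊢
  nlinarith [sq_nonneg ((b : ℤ) - c)]

variable {k m : ℕ} (h : 2 * k - 1 ≤ m)

/-- The involution of the columns that reverses the first `2 * k - 1` of them and fixes the
others. -/
def reflect (s : Fin m) : Fin m :=
  if s.1 < 2 * k - 1 then ⟨2 * k - 2 - s, by omega⟩ else s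

theorem reflect_involutive : Function.Involutive (reflect h) := by
  intro s
  ext
  simp only [reflect]
  split_ifs <;> simp_all <;> omega

theorem le_add_reflect (s : Fin m) : 2 * k - 2 ≤ s + reflect h s := by
  simp only [reflect]
  split_ifs <;> simp <;> omega

variable (k m) in
/-- The weight of the variable `x^i_s`, a strictly concave function of `s + 2 * i`, so that a
product `x^i_s x^j_{reflect s}` is heaviest when `s + 2 * i = reflect s + 2 * j`. The constant
`(m + 2 * k) ^ 2` keeps the weight a natural number without truncation. -/
def columnWeight (x : Fin k × Fin m) : ℕ :=
  (m + 2 * k) ^ 2 - (x.2 + 2 * x.1) ^ 2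

theorem columnWeight_add_sq (x : Fin k × Fin m) :
    columnWeight k m x + (x.2 + 2 * x.1) ^ 2 = (m + 2 * k) ^ 2 :=
  Nat.sub_add_cancel (Nat.pow_le_pow_left (by omega) 2)

/-- The column `s` for which `s + 2 * i = reflect s + 2 * j`. -/
def leadingColumn {i j : Fin k} (hij : i ≤ j) : Fin m :=
  ⟨k - 1 + (j - i), by omega⟩

theorem reflect_leadingColumn {i j : Fin k} (hij : i ≤ j) :
    (reflect h (leadingColumn h hij) : ℕ) = k - 1 - (j - i) := by
  have hlt : leadingColumn h hij < 2 * k - 1 := by simp only [leadingColumn]; omega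
  rw [reflect, if_pos hlt]
  simp only [leadingColumn]
  omega

/-- The exponent of the leading monomial `x^i_s x^j_{reflect s}`, `s = leadingColumn`, of
`Σ_s x^i_s x^j_{reflect s}`. -/
noncomputable def leadingExponent {i j : Fin k} (hij : i ≤ j) : Fin k × Fin m →₀ ℕ :=
  Finsupp.single (i, leadingColumn h hij) 1 +
    Finsupp.single (j, reflect h (leadingColumn h hij)) 1

theorem columnWeight_lt_of_ne_leadingColumn {i j : Fin k} (hij : i ≤ j) {s : Fin m}
    (hs : s ≠ leadingColumn h hij) :
    columnWeight k m (i, s) + columnWeight k m (j, reflect h s) <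
      columnWeight k m (i, leadingColumn h hij) +
        columnWeight k m (j, reflect h (leadingColumn h hij)) := by
  have hlead : (leadingColumn h hij : ℕ) + 2 * i = k - 1 + i + j := by
    simp only [leadingColumn]; omega
  have hlead' : (reflect h (leadingColumn h hij) : ℕ) + 2 * j = k - 1 + i + j := by
    rw [reflect_leadingColumn]; omega
  have hne : (s : ℕ) + 2 * i ≠ k - 1 + i + j := fun heq => hs (Fin.ext (by omega))
  have hle := le_add_reflect h s
  have hsq := sq_add_sq_lt_sq_add_sq (b := reflect h s + 2 * j) (by omega) hne
  have h₁ := columnWeight_add_sq (i, s)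
  have h₂ := columnWeight_add_sq (j, reflect h s)
  have h₃ := columnWeight_add_sq (i, leadingColumn h hij)
  have h₄ := columnWeight_add_sq (j, reflect h (leadingColumn h hij))
  simp only [hlead, hlead'] at h₁ h₂ h₃ h₄
  omega

theorem hasLeadingMonomial_twistedForm_reflect (R : Type*) [CommRing R] {i j : Fin k}
    (hij : i ≤ j) :
    HasLeadingMonomial (columnWeight k m) (twistedForm R (reflect h) i j)
      (leadingExponent h hij) := by
  have hX (s : Fin m) : X (i, s) * X (j, reflect h s) =
      monomial (Finsupp.single (i, s) 1 + Finsupp.single (j, reflect h s) 1) (1 : R) := by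
    rw [X, X, monomial_mul, one_mul]
  rw [HasLeadingMonomial, twistedForm,
    ← Finset.add_sum_erase _ _ (Finset.mem_univ (leadingColumn h hij)), hX, leadingExponent,
    add_sub_cancel_left]
  refine sum_mem fun s hs => ?_
  rw [hX]
  apply monomial_mem_weightLT
  simpa [Finsupp.weight_single] using
    columnWeight_lt_of_ne_leadingColumn h hij (Finset.ne_of_mem_erase hs)

theorem leadingExponent_ne_zero {i j : Fin k} (hij : i ≤ j) : leadingExponent h hij ≠ 0 := by
  simp [leadingExponent]

theorem mem_support_leadingExponent {i j : Fin k} {hij : i ≤ j} {x : Fin k × Fin m}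
    (hx : x ∈ (leadingExponent h hij).support) :
    (x.1 = i ∧ (x.2 : ℕ) = k - 1 + (j - i)) ∨ (x.1 = j ∧ (x.2 : ℕ) = k - 1 - (j - i)) := by
  rcases Finset.mem_union.1 (Finsupp.support_add hx) with hx | hx <;>
    obtain rfl := Finset.mem_singleton.1 (Finsupp.support_single_subset hx)
  · exact .inl ⟨rfl, rfl⟩
  · exact .inr ⟨rfl, reflect_leadingColumn h hij⟩

theorem pairwise_disjoint_leadingExponent :
    Pairwise (Function.onFun Disjoint
      fun p : {p : Fin k × Fin k // p.1 ≤ p.2} => leadingExponent h p.2) := by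
  intro p q hpq
  rw [Function.onFun, Finsupp.disjoint_iff, Finset.disjoint_left]
  intro x hp hq
  apply hpq
  ext <;>
    rcases mem_support_leadingExponent h hp with hp | hp <;>
    rcases mem_support_leadingExponent h hq with hq | hq <;>
    omega

end ReflectedForm

theorem isQuasiRegularFamily_r2 {k m : ℕ} (h : 2 * k - 1 ≤ m) :
    IsQuasiRegularFamily
      fun p : {p : Fin k × Fin k // p.1 ≤ p.2} => r2 k m p.1.1 p.1.2 := by
  have hτ := reflect_involutive h
  -- If `τ ^ 2 = 1` then `(1 + I) / 2 + (1 - I) / 2 * τ` is a square root of `τ`.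
  have hsq : ((1 + Complex.I) / 2) ^ 2 + ((1 - Complex.I) / 2) ^ 2 = 0 := by
    linear_combination Complex.I_sq / 2
  have hmul : 2 * ((1 + Complex.I) / 2 * ((1 - Complex.I) / 2)) = 1 := by
    linear_combination -Complex.I_sq / 2
  have hQ : IsQuasiRegularFamily
      fun p : {p : Fin k × Fin k // p.1 ≤ p.2} => twistedForm ℂ (reflect h) p.1.1 p.1.2 :=
    isQuasiRegularFamily_of_hasLeadingMonomial (pairwise_disjoint_leadingExponent h)
      (fun p => leadingExponent_ne_zero h p.2)
      fun p => hasLeadingMonomial_twistedForm_reflect h ℂ p.2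
  let T := twistEquiv (Fin k) hτ hsq hmul
  refine hQ.of_addEquiv T.symm.toAddEquiv fun p f => ?_
  have hT : T (r2 k m p.1.1 p.1.2) = twistedForm ℂ (reflect h) p.1.1 p.1.2 :=
    twistHom_sum_X_mul_X hτ hsq hmul _ _
  change T.symm _ = _ * T.symm f
  rw [map_mul, ← hT, AlgEquiv.symm_apply_apply]

/-- Uniqueness part of Theorem A: in the semistable range `m ≥ 2k - 1`, if a finitely
supported family of spherical harmonics satisfies `Σ_n r^{2n} H_n = 0`, then all `H_n = 0`;
i.e. the sum `Σ_n r^{2n} ℋ` is direct. -/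
theorem thmA_uniqueness (k m : ℕ) (hk : 0 < k) (hm : 0 < m) (h : m ≥ 2 * k - 1)
    (H : ({p : Fin k × Fin k // p.1 ≤ p.2} → ℕ) →₀ MvPolynomial (Fin k × Fin m) ℂ)
    (harm : ∀ n, IsSphericalHarmonic k m (H n))
    (hsum : (H.sum fun n Hn => r2pow k m n * Hn) = 0) :
    ∀ n, H n = 0 :=
  (isQuasiRegularFamily_r2 h).eq_zero_of_sum_eq_zero
    (V := {f | IsSphericalHarmonic k m f}) (fun _ hf => hf.eq_zero_of_mem_span) harm hsum
end

section
/- Classical Fischer decomposition in one vector variable: for every positive integer m, each complex polynomial P in the variables x_1, …, x_m has a unique representation as a finite sum P = H_0 + r² H_1 + r⁴ H_2 + ⋯ + r^{2j} H_j + ⋯, where r² = x_1² + ⋯ + x_m² and each H_j is a harmonic polynomial (Δ H_j = 0 for the Laplacian Δ = ∂_{x_1}² + ⋯ + ∂_{x_m}²). -/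
open MvPolynomial

/-- The Laplacian `Δ = Σ_s ∂_{x_s}²` on complex polynomials in `x_1, …, x_m`. -/
noncomputable def laplacian (m : ℕ) (P : MvPolynomial (Fin m) ℂ) : MvPolynomial (Fin m) ℂ :=
  ∑ s : Fin m, pderiv s (pderiv s P)

/-- The polynomial `r² = x_1² + ⋯ + x_m²`. -/
noncomputable def rSq (m : ℕ) : MvPolynomial (Fin m) ℂ :=
  ∑ s : Fin m, X s * X s

/-!
Write `r²` for the power sum `psum σ K 2`. On homogeneous polynomials of degree `k` in `m` variables
`Δ r² = r² Δ + (4k + 2m)`, and `r² Δ + c` is invertible there for every rational `c > 0`, so `Δ r²`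
is invertible as soon as `m > 0`. Hence `T = (Δ r²)⁻¹ Δ` has the harmonic polynomials as its kernel,
satisfies `T r² = 1`, and is locally nilpotent because it lowers degrees by two. The telescoping
identity `∑_{j < n} r^{2j} (1 - r² T) T^j = 1 - r^{2n} T^n` then decomposes `P` with
`H_j = (1 - r² T) T^j P`, and no other choice is possible because `(1 - r² T) T^k`
recovers `H` from `r^{2k} H` and annihilates `r^{2j} H` for `j ≠ k` whenever `H` is harmonic.
-/

lemma sum_range_pow_mul_one_sub_mul_pow {A : Type*} [Ring A] (T R : A) (n : ℕ) :
    ∑ j ∈ Finset.range n, R ^ j * (1 - R * T) * T ^ j = 1 - R ^ n * T ^ n := by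
  induction n with
  | zero => simp
  | succ n ih =>
    rw [Finset.sum_range_succ, ih, pow_succ R, pow_succ' T]
    noncomm_ring

section LeftInverse

variable {A M : Type*} [Ring A] [AddCommGroup M] [Module A M] {T R : Module.End A M}

lemma one_sub_mul_pow_mul_pow_apply (hTR : T * R = 1) {v : M} (hv : T v = 0) (j k : ℕ) :
    ((1 - R * T) * T ^ k * R ^ j) v = if j = k then v else 0 := by
  rcases lt_trichotomy j k with hjk | rfl | hjk
  · obtain ⟨d, rfl⟩ := Nat.exists_eq_add_of_le hjk
    have hcancel : T ^ (j + 1 + d) * R ^ j = T ^ d * T := by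
      rw [add_assoc, add_comm j, pow_add, mul_assoc, pow_mul_pow_eq_one j hTR, mul_one, add_comm 1,
        pow_succ]
    rw [if_neg (by lia), mul_assoc, hcancel, ← mul_assoc, Module.End.mul_apply, hv, map_zero]
  · rw [if_pos rfl, mul_assoc, pow_mul_pow_eq_one j hTR, mul_one]
    simp [hv]
  · obtain ⟨d, rfl⟩ := Nat.exists_eq_add_of_le hjk
    have hcancel : T ^ k * R ^ (k + 1 + d) = R * R ^ d := by
      rw [add_assoc, pow_add, ← mul_assoc, pow_mul_pow_eq_one k hTR, one_mul, add_comm, pow_succ']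
    have hann : (1 - R * T) * R = 0 := by rw [sub_mul, mul_assoc, hTR, one_mul, mul_one, sub_self]
    rw [if_neg (by lia), mul_assoc, hcancel, ← mul_assoc, hann, zero_mul, LinearMap.zero_apply]

theorem existsUnique_finsupp_sum_pow_apply (hTR : T * R = 1) {v : M} (hv : ∃ n, (T ^ n) v = 0) :
    ∃! h : ℕ →₀ M, (∀ j, T (h j) = 0) ∧ v = h.sum fun j w => (R ^ j) w := by
  obtain ⟨n, hn⟩ := hv
  let component (j : ℕ) : M := ((1 - R * T) * T ^ j) v
  have component_eq_zero (j : ℕ) (hj : n ≤ j) : component j = 0 := by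
    simp only [component, Module.End.mul_apply, Module.End.pow_map_zero_of_le hj hn, map_zero]
  have map_component (j : ℕ) : T (component j) = 0 := by
    have hann : T * (1 - R * T) = 0 := by rw [mul_sub, ← mul_assoc, hTR, one_mul, mul_one, sub_self]
    simp only [component]
    rw [← Module.End.mul_apply, ← mul_assoc, hann, zero_mul, LinearMap.zero_apply]
  have sum_component : ∑ j ∈ Finset.range n, (R ^ j) (component j) = v := by
    have h := congr($(sum_range_pow_mul_one_sub_mul_pow T R n) v)
    simpa [component, hn, LinearMap.sum_apply] using h
  refine ⟨Finsupp.onFinset (Finset.range n) component fun j hj =>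
    Finset.mem_range.2 (not_le.1 (mt (component_eq_zero j) hj)), ⟨map_component, ?_⟩, ?_⟩
  · rw [Finsupp.onFinset_sum _ fun j => map_zero _, sum_component]
  · rintro h ⟨hker, hsum⟩
    ext k
    calc h k = h.sum fun j w => if j = k then w else 0 := by simp
      _ = h.sum fun j w => ((1 - R * T) * T ^ k) ((R ^ j) w) :=
        Finsupp.sum_congr fun j _ => (one_sub_mul_pow_mul_pow_apply hTR (hker j) j k).symm
      _ = component k := by rw [← map_finsuppSum, ← hsum]

end LeftInverse

section Homogeneous

variable {σ τ R : Type*} [CommSemiring R]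

lemma mem_of_forall_isHomogeneous_mem {S : Submodule R (MvPolynomial σ R)}
    (hS : ∀ k, ∀ P : MvPolynomial σ R, P.IsHomogeneous k → P ∈ S) (P : MvPolynomial σ R) :
    P ∈ S := by
  rw [← sum_homogeneousComponent P]
  exact sum_mem fun k _ => hS k _ (homogeneousComponent_isHomogeneous k P)

variable {f : MvPolynomial σ R →ₗ[R] MvPolynomial τ R}

lemma homogeneousComponent_map_of_isHomogeneous_map
    (hf : ∀ k, ∀ Q : MvPolynomial σ R, Q.IsHomogeneous k → (f Q).IsHomogeneous k) (k : ℕ)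
    (Q : MvPolynomial σ R) :
    homogeneousComponent k (f Q) = f (homogeneousComponent k Q) := by
  suffices Q ∈ LinearMap.eqLocus (homogeneousComponent k ∘ₗ f) (f ∘ₗ homogeneousComponent k) from
    this
  refine mem_of_forall_isHomogeneous_mem (fun d Q hQ => ?_) Q
  rw [LinearMap.mem_eqLocus, LinearMap.comp_apply, LinearMap.comp_apply,
    homogeneousComponent_of_mem hQ, homogeneousComponent_of_mem (hf d Q hQ), apply_ite f, map_zero]

lemma bijective_of_existsUnique_isHomogeneous
    (hf : ∀ k, ∀ Q : MvPolynomial σ R, Q.IsHomogeneous k → (f Q).IsHomogeneous k)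
    (huniq : ∀ k, ∀ P : MvPolynomial τ R, P.IsHomogeneous k →
      ∃! Q : MvPolynomial σ R, Q.IsHomogeneous k ∧ f Q = P) :
    Function.Bijective f := by
  refine ⟨fun Q Q' hQ => ?_, fun P => ?_⟩
  · have component_eq (k : ℕ) : homogeneousComponent k Q = homogeneousComponent k Q' := by
      refine (huniq k _ (homogeneousComponent_isHomogeneous k (f Q))).unique
        ⟨homogeneousComponent_isHomogeneous k Q, ?_⟩ ⟨homogeneousComponent_isHomogeneous k Q', ?_⟩
      · rw [homogeneousComponent_map_of_isHomogeneous_map hf]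
      · rw [hQ, homogeneousComponent_map_of_isHomogeneous_map hf]
    ext d
    simpa only [coeff_homogeneousComponent, if_true] using
      congr(coeff d $(component_eq d.degree))
  · refine mem_of_forall_isHomogeneous_mem (S := LinearMap.range f) (fun k P hP => ?_) P
    obtain ⟨Q, ⟨-, hQ⟩, -⟩ := huniq k P hP
    exact ⟨Q, hQ⟩

end Homogeneous

section Laplacian

variable {σ K : Type*} [Fintype σ]

/-- The Laplacian `Δ = ∑ s, ∂_s²` on polynomials in finitely many variables over any commutative
semiring, as an endomorphism so that it can be composed with multiplication by `r²`. -/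
noncomputable def mvLaplacian [CommSemiring K] : Module.End K (MvPolynomial σ K) :=
  ∑ s, (pderiv s).toLinearMap ∘ₗ (pderiv s).toLinearMap

section CommSemiring

variable [CommSemiring K] {P : MvPolynomial σ K} {k : ℕ}

lemma mvLaplacian_apply (P : MvPolynomial σ K) :
    mvLaplacian P = ∑ s, pderiv s (pderiv s P) := by
  simp [mvLaplacian]

lemma isHomogeneous_mvLaplacian (hP : P.IsHomogeneous k) :
    (mvLaplacian P).IsHomogeneous (k - 2) := by
  rw [mvLaplacian_apply]
  exact IsHomogeneous.sum _ _ _ fun s _ => hP.pderiv.pderiv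

lemma mvLaplacian_eq_zero_of_lt_two (hP : P.IsHomogeneous k) (hk : k < 2) : mvLaplacian P = 0 := by
  rw [mvLaplacian_apply]
  refine Finset.sum_eq_zero fun s _ => ?_
  have hderiv : (pderiv s P).IsHomogeneous 0 := by
    simpa [show k - 1 = 0 by lia] using hP.pderiv (i := s)
  rw [totalDegree_eq_zero_iff_eq_C.1 ((totalDegree_zero_iff_isHomogeneous σ).2 hderiv), pderiv_C]

lemma isHomogeneous_psum (n : ℕ) : (psum σ K n).IsHomogeneous n :=
  IsHomogeneous.sum _ _ _ fun s _ => isHomogeneous_X_pow s n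

lemma pderiv_psum (n : ℕ) (s : σ) :
    pderiv s (psum σ K n) = (n : MvPolynomial σ K) * X s ^ (n - 1) := by
  classical
  simp [psum, pderiv_X, Pi.single_apply]

lemma mvLaplacian_psum_two_mul (P : MvPolynomial σ K) :
    mvLaplacian (psum σ K 2 * P) =
      psum σ K 2 * mvLaplacian P + 4 * ∑ s, X s * pderiv s P + (2 * Fintype.card σ) * P := by
  have hterm (s : σ) : pderiv s (pderiv s (psum σ K 2 * P)) =
      psum σ K 2 * pderiv s (pderiv s P) + 4 * (X s * pderiv s P) + 2 * P := by
    simp only [pderiv_mul, pderiv_psum, map_add, Derivation.map_natCast, pderiv_X_self,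
      Nat.add_one_sub_one, pow_one]
    push_cast
    ring
  simp only [mvLaplacian_apply, hterm, Finset.sum_add_distrib, Finset.mul_sum, Finset.sum_const,
    Finset.card_univ, nsmul_eq_mul]
  ring

lemma mvLaplacian_psum_two_mul_of_isHomogeneous (hP : P.IsHomogeneous k) :
    mvLaplacian (psum σ K 2 * P) =
      psum σ K 2 * mvLaplacian P + (4 * k + 2 * Fintype.card σ) • P := by
  rw [mvLaplacian_psum_two_mul, hP.sum_X_mul_pderiv]
  simp only [nsmul_eq_mul]
  push_cast
  ring

lemma isHomogeneous_mvLaplacian_psum_two_mul (hP : P.IsHomogeneous k) :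
    (mvLaplacian (psum σ K 2 * P)).IsHomogeneous k := by
  simpa using isHomogeneous_mvLaplacian ((isHomogeneous_psum 2).mul hP)

end CommSemiring

section RatAlgebra

variable [CommRing K] [Algebra ℚ K] {P : MvPolynomial σ K} {k : ℕ}

lemma mvLaplacian_psum_two_mul_add_smul (hP : P.IsHomogeneous k) (c : ℚ) :
    mvLaplacian (psum σ K 2 * P) + c • P =
      psum σ K 2 * mvLaplacian P + (c + (4 * k + 2 * Fintype.card σ : ℕ)) • P := by
  rw [mvLaplacian_psum_two_mul_of_isHomogeneous hP, add_smul c, Nat.cast_smul_eq_nsmul, add_assoc,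
    add_comm (c • P)]

-- `Δ` carries the equation for `Q` to one of the same shape for `Δ Q`, two degrees lower and with
-- `c` replaced by the larger constant `c + 4(k - 2) + 2m`; the value of `Δ Q` then determines `Q`.
lemma existsUnique_isHomogeneous_psum_two_mul_mvLaplacian_add_smul {c : ℚ} (hc : 0 < c)
    (hP : P.IsHomogeneous k) :
    ∃! Q : MvPolynomial σ K, Q.IsHomogeneous k ∧ psum σ K 2 * mvLaplacian Q + c • Q = P := by
  induction k using Nat.strong_induction_on generalizing c P with
  | _ k ih =>
  obtain ⟨L, hL, map_solution, eq_L⟩ : ∃ L : MvPolynomial σ K, (psum σ K 2 * L).IsHomogeneous k ∧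
      mvLaplacian (psum σ K 2 * L) + c • L = mvLaplacian P ∧
      ∀ Q : MvPolynomial σ K, Q.IsHomogeneous k →
        psum σ K 2 * mvLaplacian Q + c • Q = P → mvLaplacian Q = L := by
    rcases lt_or_ge k 2 with hk | hk
    · refine ⟨0, ?_, ?_, fun Q hQ _ => mvLaplacian_eq_zero_of_lt_two hQ hk⟩
      · simpa only [mul_zero] using isHomogeneous_zero σ K k
      · simp only [mul_zero, map_zero, smul_zero, add_zero, mvLaplacian_eq_zero_of_lt_two hP hk]
    · have hshift : 0 < c + (4 * (k - 2) + 2 * Fintype.card σ : ℕ) := by positivity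
      obtain ⟨L, ⟨hL, hLP⟩, huniq⟩ := ih (k - 2) (by lia) hshift (isHomogeneous_mvLaplacian hP)
      refine ⟨L, ?_, ?_, fun Q hQ hQP => huniq _ ⟨isHomogeneous_mvLaplacian hQ, ?_⟩⟩
      · simpa only [Nat.add_sub_cancel' hk] using (isHomogeneous_psum 2).mul hL
      · rw [mvLaplacian_psum_two_mul_add_smul hL, hLP]
      · rw [← mvLaplacian_psum_two_mul_add_smul (isHomogeneous_mvLaplacian hQ), ← hQP, map_add,
          LinearMap.map_smul_of_tower]
  have mvLaplacian_solution : mvLaplacian (c⁻¹ • (P - psum σ K 2 * L)) = L := by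
    rw [LinearMap.map_smul_of_tower, map_sub, ← map_solution, add_sub_cancel_left,
      inv_smul_smul₀ hc.ne']
  refine ⟨c⁻¹ • (P - psum σ K 2 * L), ⟨?_, ?_⟩, fun Q ⟨hQ, hQP⟩ => ?_⟩
  · exact (homogeneousSubmodule σ K k).smul_of_tower_mem c⁻¹ (hP.sub hL)
  · rw [mvLaplacian_solution, smul_inv_smul₀ hc.ne', add_sub_cancel]
  · rw [eq_inv_smul_iff₀ hc.ne', ← eq_L Q hQ hQP, ← hQP, add_sub_cancel_left]

variable [Nonempty σ]

lemma existsUnique_isHomogeneous_mvLaplacian_psum_two_mul (hP : P.IsHomogeneous k) :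
    ∃! Q : MvPolynomial σ K, Q.IsHomogeneous k ∧ mvLaplacian (psum σ K 2 * Q) = P := by
  have hc : 0 < ((4 * k + 2 * Fintype.card σ : ℕ) : ℚ) := by
    exact_mod_cast Nat.add_pos_right _ (by positivity)
  refine (existsUnique_congr fun Q => and_congr_right fun hQ => ?_).1
    (existsUnique_isHomogeneous_psum_two_mul_mvLaplacian_add_smul hc hP)
  rw [mvLaplacian_psum_two_mul_of_isHomogeneous hQ, Nat.cast_smul_eq_nsmul]

lemma bijective_mvLaplacian_mul_mulLeft_psum_two :
    Function.Bijective
      (mvLaplacian * LinearMap.mulLeft K (psum σ K 2) : Module.End K (MvPolynomial σ K)) :=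
  bijective_of_existsUnique_isHomogeneous
    (fun _ _ hQ => isHomogeneous_mvLaplacian_psum_two_mul hQ)
    (fun _ _ hP => existsUnique_isHomogeneous_mvLaplacian_psum_two_mul hP)

/-- The quotient of `P` in its Fischer division by `r²`: the unique `Q` such that `P - r² Q` is
harmonic, obtained linearly in `P` as `(Δ r²)⁻¹ Δ P`. -/
noncomputable def fischerQuotient : Module.End K (MvPolynomial σ K) :=
  (LinearEquiv.ofBijective _ bijective_mvLaplacian_mul_mulLeft_psum_two).symm.toLinearMap *
    mvLaplacian

lemma fischerQuotient_eq_iff {Q : MvPolynomial σ K} :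
    fischerQuotient P = Q ↔ mvLaplacian (psum σ K 2 * Q) = mvLaplacian P := by
  rw [fischerQuotient, Module.End.mul_apply, LinearEquiv.coe_coe, LinearEquiv.symm_apply_eq,
    eq_comm]
  rfl

lemma fischerQuotient_mul_mulLeft_psum_two :
    fischerQuotient * LinearMap.mulLeft K (psum σ K 2) = 1 :=
  LinearMap.ext fun _ => fischerQuotient_eq_iff.2 rfl

lemma fischerQuotient_eq_zero_iff : fischerQuotient P = 0 ↔ mvLaplacian P = 0 := by
  rw [fischerQuotient_eq_iff, mul_zero, map_zero, eq_comm]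

lemma isHomogeneous_fischerQuotient (hP : P.IsHomogeneous k) :
    (fischerQuotient P).IsHomogeneous (k - 2) := by
  obtain ⟨Q, ⟨hQ, hQP⟩, -⟩ :=
    existsUnique_isHomogeneous_mvLaplacian_psum_two_mul (isHomogeneous_mvLaplacian hP)
  rwa [fischerQuotient_eq_iff.2 hQP]

lemma exists_fischerQuotient_pow_apply_eq_zero (P : MvPolynomial σ K) :
    ∃ n, (fischerQuotient ^ n) P = 0 := by
  suffices P ∈ fischerQuotient.maxGenEigenspace 0 by
    simpa only [Module.End.mem_maxGenEigenspace, zero_smul, sub_zero] using this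
  refine mem_of_forall_isHomogeneous_mem (fun k Q hQ => ?_) P
  simp only [Module.End.mem_maxGenEigenspace, zero_smul, sub_zero]
  induction k using Nat.strong_induction_on generalizing Q with
  | _ k ih =>
  rcases lt_or_ge k 2 with hk | hk
  · exact ⟨1, by rw [pow_one, fischerQuotient_eq_zero_iff, mvLaplacian_eq_zero_of_lt_two hQ hk]⟩
  · obtain ⟨n, hn⟩ := ih (k - 2) (by lia) _ (isHomogeneous_fischerQuotient hQ)
    exact ⟨n + 1, by rw [pow_succ, Module.End.mul_apply, hn]⟩

theorem classical_fischer_general (P : MvPolynomial σ K) :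
    ∃! H : ℕ →₀ MvPolynomial σ K,
      (∀ j, mvLaplacian (H j) = 0) ∧ P = H.sum fun j Hj => psum σ K 2 ^ j * Hj := by
  simpa only [fischerQuotient_eq_zero_iff, LinearMap.pow_mulLeft, LinearMap.mulLeft_apply] using
    existsUnique_finsupp_sum_pow_apply fischerQuotient_mul_mulLeft_psum_two
      (exists_fischerQuotient_pow_apply_eq_zero P)

end RatAlgebra

end Laplacian

/-- Classical Fischer decomposition: every complex polynomial in `x_1, …, x_m` has a unique
representation `P = Σ_j r^{2j} H_j` as a finite sum with each `H_j` harmonic. -/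
theorem classical_fischer (m : ℕ) (hm : 0 < m) (P : MvPolynomial (Fin m) ℂ) :
    ∃! H : ℕ →₀ MvPolynomial (Fin m) ℂ,
      (∀ j, laplacian m (H j) = 0) ∧ P = H.sum fun j Hj => (rSq m) ^ j * Hj := by
  have : Nonempty (Fin m) := ⟨⟨0, hm⟩⟩
  simpa only [mvLaplacian_apply, psum, pow_two, laplacian, rSq] using classical_fischer_general P
end

section
/- Monogenic Fischer decomposition in one vector variable for Clifford-algebra-valued polynomials: every polynomial P in x_1, …, x_m with coefficients in the complex Clifford algebra Cl_m has a unique representation as a finite sum P = M_0 + x M_1 + x² M_2 + ⋯ + x^j M_j + ⋯, where x denotes the operator of left multiplication by the vector variable x = x_1 e_1 + ⋯ + x_m e_m, and each M_j is monogenic, i.e. ∂ M_j = 0 for the Dirac operator ∂ = e_1 ∂_{x_1} + ⋯ + e_m ∂_{x_m}. -/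
open MvPolynomial TensorProduct

/-- The quadratic form `−(z_1² + ⋯ + z_m²)` on `ℂ^m`, whose Clifford algebra is the complex
Clifford algebra `Cl_m` with `e_s e_t + e_t e_s = −2δ_{st}`. -/
noncomputable def cliffordQ (m : ℕ) : QuadraticForm ℂ (Fin m → ℂ) :=
  QuadraticMap.weightedSumSquares ℂ (fun _ : Fin m => (-1 : ℂ))

/-- The generator `e_s` of the Clifford algebra `Cl_m`. -/
noncomputable def e (m : ℕ) (s : Fin m) : CliffordAlgebra (cliffordQ m) :=
  CliffordAlgebra.ι (cliffordQ m) (Pi.single s 1)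

/-- The Dirac operator `∂ = Σ_s (e_s ·) ∘ ∂_{x_s}` on Clifford-algebra-valued polynomials. -/
noncomputable def dirac (m : ℕ) :
    (MvPolynomial (Fin m) ℂ ⊗[ℂ] CliffordAlgebra (cliffordQ m)) →ₗ[ℂ]
      (MvPolynomial (Fin m) ℂ ⊗[ℂ] CliffordAlgebra (cliffordQ m)) :=
  ∑ s : Fin m,
    TensorProduct.map ((pderiv s).toLinearMap) (LinearMap.mulLeft ℂ (e m s))

/-- The vector variable operator `x = Σ_s (x_s ·) ∘ (e_s ·)`. -/
noncomputable def vecVar (m : ℕ) :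
    (MvPolynomial (Fin m) ℂ ⊗[ℂ] CliffordAlgebra (cliffordQ m)) →ₗ[ℂ]
      (MvPolynomial (Fin m) ℂ ⊗[ℂ] CliffordAlgebra (cliffordQ m)) :=
  ∑ s : Fin m,
    TensorProduct.map (LinearMap.mulLeft ℂ (X s)) (LinearMap.mulLeft ℂ (e m s))

/-!
Write `∂` and `x` for the Dirac operator and the vector variable, `E` for the Euler operator, and
`h = 2E + m`. Then `∂x + x∂ = -h`, while `x` and `∂` shift `h` by `±2`; these are the relations of
`osp(1|2)`. By induction `∂ x^(j+1) = ± x^(j+1) ∂ - x^j c_j`, where `c_j` is `h + j` for even `j`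
and `j + 1` for odd `j`. Since `E` acts on homogeneous polynomials by their degree and `m > 0`,
every `c_j` is invertible, and it permutes the monogenic polynomials; hence so does `∂^j x^j`.
As `∂` lowers degrees, `∂^(n+1) P = 0` for some `n`. Existence: `∂^n P` is monogenic, so it equals
`∂^n x^n M_n` for some monogenic `M_n`, and `∂^n` kills `P - x^n M_n`. Uniqueness: `∂^n` applied to
a relation `∑ x^j M_j = 0` with top index `n` leaves only `∂^n x^n M_n = 0`.
-/

section LinearAlgebra

variable {R V : Type*} [Ring R] [AddCommGroup V] [Module R V]

theorem exists_finsupp_sum_pow_of_surjOn_ker {D x : Module.End R V}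
    (hsurj : ∀ j, Set.SurjOn ⇑(D ^ j * x ^ j) D.ker D.ker) {n : ℕ} {P : V}
    (hP : (D ^ n) P = 0) :
    ∃ M : ℕ →₀ V, (∀ j, D (M j) = 0) ∧ P = M.sum fun j Mj => (x ^ j) Mj := by
  induction n generalizing P with
  | zero => exact ⟨0, by simp, by simpa using hP⟩
  | succ n ih =>
    have hmem : (D ^ n) P ∈ D.ker := by
      rwa [LinearMap.mem_ker, ← Module.End.mul_apply, ← pow_succ']
    obtain ⟨N, hN, hNP⟩ := hsurj n hmem
    obtain ⟨M, hM, hPM⟩ := ih (P := P - (x ^ n) N) <| by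
      rw [map_sub, ← Module.End.mul_apply, hNP, sub_self]
    refine ⟨M + Finsupp.single n N, fun j => ?_, ?_⟩
    · rw [Finsupp.add_apply, map_add, hM, zero_add, Finsupp.single_apply]
      split_ifs
      exacts [hN, map_zero D]
    · rw [Finsupp.sum_add_index' (by simp) (by simp), ← hPM, Finsupp.sum_single_index (by simp),
        sub_add_cancel]

theorem eq_zero_of_finsupp_sum_pow_eq_zero {D x : Module.End R V}
    (hmaps : ∀ j, Set.MapsTo ⇑(D ^ j * x ^ j) D.ker D.ker)
    (hinj : ∀ j, Set.InjOn ⇑(D ^ j * x ^ j) D.ker) {M : ℕ →₀ V}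
    (hM : ∀ j, D (M j) = 0) (hsum : (M.sum fun j Mj => (x ^ j) Mj) = 0) : M = 0 := by
  by_contra hne
  obtain ⟨N, hN, hmax⟩ := M.support.exists_max_image id (Finsupp.support_nonempty_iff.mpr hne)
  have hkill : ∀ j ∈ M.support, j ≠ N → (D ^ N) ((x ^ j) (M j)) = 0 := fun j hj hjN => by
    have hlt : j < N := (hmax j hj).lt_of_ne hjN
    have hker : D ((D ^ j * x ^ j) (M j)) = 0 := hmaps j (hM j)
    rw [← Nat.sub_add_cancel hlt, pow_add, pow_succ', Module.End.mul_apply, Module.End.mul_apply,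
      ← Module.End.mul_apply (D ^ j), hker, map_zero]
  have htop : (D ^ N * x ^ N) (M N) = 0 := by
    rw [Module.End.mul_apply, ← Finset.sum_eq_single_of_mem N hN hkill, ← map_sum]
    exact (congrArg _ hsum).trans (map_zero _)
  exact Finsupp.mem_support_iff.mp hN <|
    hinj N (hM N) D.ker.zero_mem (htop.trans (map_zero _).symm)

theorem existsUnique_finsupp_sum_pow_of_bijOn_ker {D x : Module.End R V}
    (hbij : ∀ j, Set.BijOn ⇑(D ^ j * x ^ j) D.ker D.ker) {P : V} (hP : ∃ n : ℕ, (D ^ n) P = 0) :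
    ∃! M : ℕ →₀ V, (∀ j, D (M j) = 0) ∧ P = M.sum fun j Mj => (x ^ j) Mj := by
  obtain ⟨n, hn⟩ := hP
  obtain ⟨M, hM, hPM⟩ := exists_finsupp_sum_pow_of_surjOn_ker (fun j => (hbij j).surjOn) hn
  refine ⟨M, ⟨hM, hPM⟩, fun M' ⟨hM', hPM'⟩ => sub_eq_zero.mp ?_⟩
  refine eq_zero_of_finsupp_sum_pow_eq_zero (fun j => (hbij j).mapsTo)
    (fun j => (hbij j).injOn) (fun j => ?_) ?_
  · rw [Finsupp.sub_apply, map_sub, hM, hM', sub_zero]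
  · rw [Finsupp.sum_sub_index (by simp), ← hPM, ← hPM', sub_self]

theorem bijOn_ker_of_isUnit {D f g : Module.End R V} (hf : IsUnit f) (hg : IsUnit g)
    (h : D * f = g * D) : Set.BijOn f D.ker D.ker := by
  rw [Module.End.isUnit_iff] at hf hg
  have hDf (v : V) : D (f v) = g (D v) := LinearMap.congr_fun h v
  refine ⟨fun v hv => ?_, hf.injective.injOn, fun w hw => ?_⟩
  · exact (hDf v).trans ((congrArg g hv).trans (map_zero g))
  · obtain ⟨v, rfl⟩ := hf.surjective w
    exact ⟨v, hg.injective (((hDf v).symm.trans hw).trans (map_zero g).symm), rfl⟩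

theorem bijOn_pow_mul_pow_ker {D x : Module.End R V} {c : ℕ → Module.End R V}
    (hc : ∀ j, Set.BijOn (c j) D.ker D.ker)
    (hD : ∀ j, ∀ v ∈ D.ker, D ((x ^ (j + 1)) v) = (x ^ j) (c j v)) (j : ℕ) :
    Set.BijOn ⇑(D ^ j * x ^ j) D.ker D.ker := by
  induction j with
  | zero => simpa only [pow_zero, mul_one, Module.End.coe_one] using Set.bijOn_id _
  | succ j ih =>
    refine (ih.comp (hc j)).congr fun v hv => ?_
    rw [Function.comp_apply, Module.End.mul_apply, ← hD j v hv, pow_succ D]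
    rfl

end LinearAlgebra

/-- The defining relations of the Lie superalgebra `osp(1|2)`, with `x` the raising and `D` the
lowering odd generator; compare `IsSl2Triple`. They are normalised so that the Dirac operator and
the vector variable satisfy them with `h = 2E + m`, where `E` is the Euler operator. -/
structure IsOspTriple {A : Type*} [Ring A] (h x D : A) : Prop where
  D_mul_x_add_x_mul_D : D * x + x * D = -h
  h_mul_x : h * x = x * h + 2 * x
  D_mul_h : D * h = h * D + 2 * D

namespace IsOspTriple

section Ring

variable {A : Type*} [Ring A] {h x D : A}

/-- The factor `c_j` by which lowering undoes raising: `D * x ^ (j + 1) = -(x ^ j * c_j)` up to a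
multiple of `D` on the right. -/
def loweringCoeff (h : A) (j : ℕ) : A :=
  if Even j then h + j else j + 1

lemma loweringCoeff_add_succ (h : A) (j : ℕ) :
    loweringCoeff h j + loweringCoeff h (j + 1) = h + 2 * (j + 1) := by
  unfold loweringCoeff
  by_cases hj : Even j
  · simp only [hj, if_true, Nat.even_add_one, not_true_eq_false, if_false]
    push_cast
    noncomm_ring
  · simp only [hj, if_false, Nat.even_add_one, not_false_eq_true, if_true]
    push_cast
    noncomm_ring

lemma isUnit_loweringCoeff (hA : ∀ n : ℕ, IsUnit (n + 1 : A)) (hh : ∀ n : ℕ, IsUnit (h + n))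
    (j : ℕ) : IsUnit (loweringCoeff h j) := by
  unfold loweringCoeff
  split_ifs
  exacts [hh j, hA j]

lemma D_mul_loweringCoeff (ht : IsOspTriple h x D) (j : ℕ) :
    D * loweringCoeff h j = loweringCoeff (h + 2) j * D := by
  have hcomm : D * (j : A) = j * D := (Nat.commute_cast D j).eq
  unfold loweringCoeff
  split_ifs
  · rw [mul_add, ht.D_mul_h, hcomm]
    noncomm_ring
  · rw [mul_add, hcomm]
    noncomm_ring

lemma D_mul_x (ht : IsOspTriple h x D) : D * x = -(x * D) - h := by
  rw [eq_sub_of_add_eq ht.D_mul_x_add_x_mul_D]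
  abel

lemma h_mul_x_pow (ht : IsOspTriple h x D) (j : ℕ) :
    h * x ^ j = x ^ j * (h + 2 * j) := by
  induction j with
  | zero => simp
  | succ j ih =>
    calc h * x ^ (j + 1) = h * x ^ j * x := by rw [pow_succ, mul_assoc]
      _ = x ^ j * (h * x) + x ^ j * (2 * (j * x)) := by rw [ih]; noncomm_ring
      _ = x ^ j * x * (h + 2 * (j + 1)) := by
        rw [ht.h_mul_x, (Nat.cast_commute j x).eq]; noncomm_ring
      _ = x ^ (j + 1) * (h + 2 * (j + 1 : ℕ)) := by rw [pow_succ]; push_cast; rfl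

theorem D_mul_x_pow_succ (ht : IsOspTriple h x D) (j : ℕ) :
    D * x ^ (j + 1) = (-x) ^ (j + 1) * D - x ^ j * loweringCoeff h j := by
  induction j with
  | zero => simpa [loweringCoeff] using ht.D_mul_x
  | succ j ih =>
    calc D * x ^ (j + 1 + 1) = -x * (D * x ^ (j + 1)) - h * x ^ (j + 1) := by
          rw [pow_succ' x (j + 1), ← mul_assoc, ht.D_mul_x]; noncomm_ring
      _ = -x * (-x) ^ (j + 1) * D -
            (x ^ (j + 1) * (h + 2 * (j + 1)) - x * x ^ j * loweringCoeff h j) := by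
        rw [ih, ht.h_mul_x_pow]; push_cast; noncomm_ring
      _ = (-x) ^ (j + 1 + 1) * D - x ^ (j + 1) * loweringCoeff h (j + 1) := by
        rw [← loweringCoeff_add_succ, ← pow_succ', ← pow_succ', mul_add, add_sub_cancel_left]

end Ring

theorem existsUnique_finsupp_sum_pow {R V : Type*} [Ring R] [AddCommGroup V] [Module R V]
    {h x D : Module.End R V} (ht : IsOspTriple h x D)
    (hV : ∀ n : ℕ, IsUnit (n + 1 : Module.End R V)) (hh : ∀ n : ℕ, IsUnit (h + n))
    {P : V} (hP : ∃ n : ℕ, (D ^ n) P = 0) :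
    ∃! M : ℕ →₀ V, (∀ j, D (M j) = 0) ∧ P = M.sum fun j Mj => (x ^ j) Mj := by
  have hh' (n : ℕ) : IsUnit (h + 2 + n) := by
    simpa [add_assoc, add_comm (n : Module.End R V)] using hh (n + 2)
  refine existsUnique_finsupp_sum_pow_of_bijOn_ker (bijOn_pow_mul_pow_ker
    (c := fun j => -loweringCoeff h j) (fun j => ?_) fun j v hv => ?_) hP
  · exact bijOn_ker_of_isUnit (isUnit_loweringCoeff hV hh j).neg
      (isUnit_loweringCoeff hV hh' j).neg (by rw [mul_neg, ht.D_mul_loweringCoeff, neg_mul])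
  · rw [← Module.End.mul_apply, ht.D_mul_x_pow_succ, LinearMap.sub_apply, Module.End.mul_apply,
      LinearMap.mem_ker.mp hv, map_zero, zero_sub, Module.End.mul_apply, LinearMap.neg_apply,
      map_neg]

end IsOspTriple


theorem isUnit_of_basis_eigenvectors {ι R M : Type*} [CommRing R] [AddCommGroup M] [Module R M]
    (b : Module.Basis ι R M) {f : Module.End R M} {μ : ι → R} (hμ : ∀ i, IsUnit (μ i))
    (hf : ∀ i, f (b i) = μ i • b i) : IsUnit f := by
  have hfb : f = b.equiv (b.isUnitSMul hμ) (Equiv.refl ι) :=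
    b.ext fun i => by simp [hf, Module.Basis.isUnitSMul_apply]
  rw [hfb, Module.End.isUnit_iff]
  exact LinearEquiv.bijective _

lemma isUnit_natCast_of_algebra_rat {A : Type*} [Ring A] [Algebra ℚ A] {n : ℕ} (hn : n ≠ 0) :
    IsUnit (n : A) := by
  simpa using (IsUnit.mk0 (n : ℚ) (Nat.cast_ne_zero.mpr hn)).map (algebraMap ℚ A)

section Euler

variable (R ι : Type*) [CommRing R] [Fintype ι]

/-- The Euler operator `∑ s, X s * ∂ / ∂ X s` on polynomials, as a derivation. -/
noncomputable def eulerDerivation :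
    Derivation R (MvPolynomial ι R) (MvPolynomial ι R) :=
  ∑ s, (X s : MvPolynomial ι R) • pderiv s

variable {R ι}

lemma eulerDerivation_apply (p : MvPolynomial ι R) :
    eulerDerivation R ι p = ∑ s, X s * pderiv s p := by
  rw [eulerDerivation, ← Derivation.coeFnAddMonoidHom_apply, map_sum, Finset.sum_apply]
  rfl

lemma eulerDerivation_X (s : ι) : eulerDerivation R ι (X s) = X s := by
  classical
  simp [eulerDerivation_apply, pderiv_X, Pi.single_apply]

lemma eulerDerivation_monomial (d : ι →₀ ℕ) (c : R) :
    eulerDerivation R ι (monomial d c) = (d.degree : R) • monomial d c := by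
  rw [eulerDerivation_apply, (isHomogeneous_monomial c rfl).sum_X_mul_pderiv,
    Nat.cast_smul_eq_nsmul]

lemma lie_pderiv_eulerDerivation (s : ι) :
    ⁅pderiv (R := R) s, eulerDerivation R ι⁆ = pderiv s := by
  classical
  refine derivation_ext fun t => ?_
  rw [Derivation.commutator_apply, eulerDerivation_X, pderiv_X, Pi.single_apply]
  split_ifs <;> simp

theorem isUnit_nsmul_eulerDerivation_add_natCast [Algebra ℚ R] (k : ℕ) {a : ℕ} (ha : a ≠ 0) :
    IsUnit (k • (eulerDerivation R ι : Module.End R (MvPolynomial ι R)) + a) := by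
  have hμ (d : ι →₀ ℕ) : IsUnit (k * d.degree + a : R) :=
    mod_cast isUnit_natCast_of_algebra_rat (n := k * d.degree + a) (by omega)
  refine isUnit_of_basis_eigenvectors (basisMonomials ι R) hμ fun d => ?_
  simp [eulerDerivation_monomial, add_smul, mul_smul, Nat.cast_smul_eq_nsmul]

end Euler

/-- Pairwise anticommuting square roots of `-1`, which is the presentation of the Clifford algebra
of the form `-∑ s, z s ^ 2` by its standard generators. -/
structure IsCliffordFamily {ι A : Type*} [Ring A] (γ : ι → A) : Prop where
  mul_self : ∀ s, γ s * γ s = -1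
  anticomm : Pairwise fun s t => γ s * γ t = -(γ t * γ s)

lemma IsCliffordFamily.map {ι A B : Type*} [Ring A] [Ring B] {γ : ι → A}
    (hγ : IsCliffordFamily γ) (f : A →+* B) : IsCliffordFamily fun s => f (γ s) where
  mul_self s := by rw [← map_mul, hγ.mul_self, map_neg, map_one]
  anticomm s t hst := by
    dsimp only
    rw [← map_mul, hγ.anticomm hst, map_neg, map_mul]

section CliffordModule

variable {R ι W : Type*} [CommRing R] [Fintype ι] [AddCommGroup W] [Module R W]

/-- The Dirac operator on polynomials with values in a module `W` on which the Clifford generators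
act through `γ`. -/
noncomputable def diracEnd (γ : ι → Module.End R W) : Module.End R (MvPolynomial ι R ⊗[R] W) :=
  ∑ s, TensorProduct.map (pderiv s).toLinearMap (γ s)

/-- The vector variable as an operator on polynomials with values in a module `W` on which the
Clifford generators act through `γ`. -/
noncomputable def vecVarEnd (γ : ι → Module.End R W) : Module.End R (MvPolynomial ι R ⊗[R] W) :=
  ∑ s, TensorProduct.map (LinearMap.mulLeft R (X s)) (γ s)

variable (R ι W) in
/-- The Euler operator on `W`-valued polynomials. -/
noncomputable def eulerEnd : Module.End R (MvPolynomial ι R ⊗[R] W) :=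
  LinearMap.rTensor W (eulerDerivation R ι).toLinearMap

lemma eulerEnd_mul_vecVarEnd (γ : ι → Module.End R W) :
    eulerEnd R ι W * vecVarEnd γ = vecVarEnd γ * eulerEnd R ι W + vecVarEnd γ := by
  refine TensorProduct.ext' fun p w => ?_
  simp [eulerEnd, vecVarEnd, Finset.sum_add_distrib, eulerDerivation_X, TensorProduct.add_tmul,
    mul_comm p]

lemma diracEnd_mul_eulerEnd (γ : ι → Module.End R W) :
    diracEnd γ * eulerEnd R ι W = eulerEnd R ι W * diracEnd γ + diracEnd γ := by
  have hcomm (s : ι) (p : MvPolynomial ι R) : pderiv s (eulerDerivation R ι p) =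
      eulerDerivation R ι (pderiv s p) + pderiv s p := by
    rw [← sub_eq_iff_eq_add', ← Derivation.commutator_apply, lie_pderiv_eulerDerivation]
  refine TensorProduct.ext' fun p w => ?_
  simp [eulerEnd, diracEnd, Finset.sum_add_distrib, hcomm, TensorProduct.add_tmul]

lemma diracEnd_mul_vecVarEnd_add {γ : ι → Module.End R W} (hγ : IsCliffordFamily γ) :
    diracEnd γ * vecVarEnd γ + vecVarEnd γ * diracEnd γ =
      -(2 • eulerEnd R ι W + (Fintype.card ι : Module.End R (MvPolynomial ι R ⊗[R] W))) := by
  classical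
  have hterm (p : MvPolynomial ι R) (w : W) (s t : ι) :
      pderiv s (X t * p) ⊗ₜ[R] γ s (γ t w) + (X t * pderiv s p) ⊗ₜ[R] γ t (γ s w) =
        if s = t then -(2 • (X s * pderiv s p) ⊗ₜ[R] w + p ⊗ₜ[R] w) else 0 := by
    split_ifs with hst
    · subst hst
      have hsq : γ s (γ s w) = -w := LinearMap.congr_fun (hγ.mul_self s) w
      rw [pderiv_mul, pderiv_X_self, one_mul, hsq, TensorProduct.add_tmul]
      simp only [TensorProduct.tmul_neg]
      abel
    · have hst' : γ s (γ t w) = -γ t (γ s w) := LinearMap.congr_fun (hγ.anticomm hst) w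
      rw [pderiv_mul, pderiv_X_of_ne (Ne.symm hst), zero_mul, zero_add, hst',
        TensorProduct.tmul_neg, neg_add_cancel]
  refine TensorProduct.ext' fun p w => ?_
  calc (diracEnd γ * vecVarEnd γ + vecVarEnd γ * diracEnd γ) (p ⊗ₜ[R] w)
      = ∑ s, ∑ t, (pderiv s (X t * p) ⊗ₜ[R] γ s (γ t w) +
          (X t * pderiv s p) ⊗ₜ[R] γ t (γ s w)) := by
        simp only [LinearMap.add_apply, Module.End.mul_apply, diracEnd, vecVarEnd,
          LinearMap.sum_apply, map_sum, TensorProduct.map_tmul, Derivation.coeFn_coe,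
          LinearMap.mulLeft_apply, Finset.sum_add_distrib]
        rw [Finset.sum_comm]
    _ = ∑ s, -(2 • (X s * pderiv s p) ⊗ₜ[R] w + p ⊗ₜ[R] w) := by
        simp only [hterm, Finset.sum_ite_eq, Finset.mem_univ, if_true]
    _ = _ := by
        simp [eulerEnd, eulerDerivation_apply, Finset.sum_add_distrib, TensorProduct.sum_tmul]

theorem isOspTriple_diracEnd {γ : ι → Module.End R W} (hγ : IsCliffordFamily γ) :
    IsOspTriple (2 • eulerEnd R ι W + (Fintype.card ι : Module.End R (MvPolynomial ι R ⊗[R] W)))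
      (vecVarEnd γ) (diracEnd γ) where
  D_mul_x_add_x_mul_D := diracEnd_mul_vecVarEnd_add hγ
  h_mul_x := by
    rw [add_mul, smul_mul_assoc, eulerEnd_mul_vecVarEnd, mul_add, (Nat.cast_commute _ _).eq]
    noncomm_ring
  D_mul_h := by
    rw [mul_add, mul_smul_comm, diracEnd_mul_eulerEnd, add_mul, (Nat.cast_commute _ _).eq]
    noncomm_ring

theorem isUnit_nsmul_eulerEnd_add_natCast [Algebra ℚ R] (k : ℕ) {a : ℕ} (ha : a ≠ 0) :
    IsUnit (k • eulerEnd R ι W + a) := by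
  have h := (isUnit_nsmul_eulerDerivation_add_natCast (R := R) (ι := ι) k ha).map
    (Module.End.rTensorAlgHom R (MvPolynomial ι R) W)
  rwa [map_add, map_nsmul, map_natCast] at h

lemma diracEnd_pow_tmul_eq_zero (γ : ι → Module.End R W) {n : ℕ} {p : MvPolynomial ι R}
    (hp : p.IsHomogeneous n) (w : W) : (diracEnd γ ^ (n + 1)) (p ⊗ₜ[R] w) = 0 := by
  induction n generalizing p w with
  | zero =>
    obtain ⟨c, rfl⟩ : ∃ c, p = C c :=
      ⟨_, totalDegree_eq_zero_iff_eq_C.mp (Nat.le_zero.mp hp.totalDegree_le)⟩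
    simp [diracEnd]
  | succ n ih =>
    rw [pow_succ, Module.End.mul_apply, diracEnd, LinearMap.sum_apply, map_sum]
    exact Finset.sum_eq_zero fun s _ => ih hp.pderiv (γ s w)

lemma exists_diracEnd_pow_eq_zero (γ : ι → Module.End R W) (P : MvPolynomial ι R ⊗[R] W) :
    ∃ n : ℕ, (diracEnd γ ^ n) P = 0 := by
  induction P using TensorProduct.induction_on with
  | zero => exact ⟨0, map_zero _⟩
  | add u v hu hv =>
    obtain ⟨k, hk⟩ := hu
    obtain ⟨l, hl⟩ := hv
    refine ⟨max k l, ?_⟩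
    rw [map_add, Module.End.pow_map_zero_of_le (le_max_left k l) hk,
      Module.End.pow_map_zero_of_le (le_max_right k l) hl, add_zero]
  | tmul p w =>
    have hp : p ⊗ₜ[R] w =
        ∑ n ∈ Finset.range (p.totalDegree + 1), homogeneousComponent n p ⊗ₜ[R] w := by
      rw [← TensorProduct.sum_tmul, sum_homogeneousComponent]
    refine ⟨p.totalDegree + 1, ?_⟩
    rw [hp, map_sum]
    exact Finset.sum_eq_zero fun n hn => Module.End.pow_map_zero_of_le (Finset.mem_range.mp hn)
      (diracEnd_pow_tmul_eq_zero γ (homogeneousComponent_isHomogeneous n p) w)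

theorem monogenic_fischer_general [Algebra ℚ R] [Nonempty ι] {γ : ι → Module.End R W}
    (hγ : IsCliffordFamily γ) (P : MvPolynomial ι R ⊗[R] W) :
    ∃! M : ℕ →₀ MvPolynomial ι R ⊗[R] W,
      (∀ j, diracEnd γ (M j) = 0) ∧ P = M.sum fun j Mj => (vecVarEnd γ ^ j) Mj := by
  refine (isOspTriple_diracEnd hγ).existsUnique_finsupp_sum_pow (fun n => ?_) (fun n => ?_)
    (exists_diracEnd_pow_eq_zero γ P)
  · simpa using isUnit_natCast_of_algebra_rat n.succ_ne_zero
  · simpa [add_assoc] using isUnit_nsmul_eulerEnd_add_natCast 2 (a := Fintype.card ι + n) (by simp)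

end CliffordModule

lemma cliffordQ_single (m : ℕ) (s : Fin m) : cliffordQ m (Pi.single s 1) = -1 := by
  simp [cliffordQ, QuadraticMap.weightedSumSquares_apply, Pi.single_apply]

lemma isOrtho_cliffordQ_single {m : ℕ} {s t : Fin m} (hst : s ≠ t) :
    (cliffordQ m).IsOrtho (Pi.single s 1) (Pi.single t 1) := by
  rw [QuadraticMap.isOrtho_def]
  simp only [cliffordQ, QuadraticMap.weightedSumSquares_apply, ← Finset.sum_add_distrib]
  refine Finset.sum_congr rfl fun i _ => ?_
  rcases eq_or_ne i s with rfl | his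
  · simp [Pi.single_eq_of_ne hst]
  · simp [Pi.single_eq_of_ne his]

lemma isCliffordFamily_e (m : ℕ) : IsCliffordFamily (e m) where
  mul_self s := by
    rw [e, CliffordAlgebra.ι_sq_scalar, cliffordQ_single, map_neg, map_one]
  anticomm _ _ hst := CliffordAlgebra.ι_mul_ι_comm_of_isOrtho (isOrtho_cliffordQ_single hst)

/-- Monogenic Fischer decomposition in one vector variable: every Clifford-algebra-valued
polynomial `P` has a unique representation `P = Σ_j x^j M_j` as a finite sum with each
`M_j` monogenic (`∂ M_j = 0`). -/
theorem monogenic_fischer (m : ℕ) (hm : 0 < m)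
    (P : MvPolynomial (Fin m) ℂ ⊗[ℂ] CliffordAlgebra (cliffordQ m)) :
    ∃! M : ℕ →₀ (MvPolynomial (Fin m) ℂ ⊗[ℂ] CliffordAlgebra (cliffordQ m)),
      (∀ j, dirac m (M j) = 0) ∧ P = M.sum fun j Mj => (vecVar m ^ j) Mj := by
  have hγ : IsCliffordFamily fun s => LinearMap.mulLeft ℂ (e m s) :=
    (isCliffordFamily_e m).map (Algebra.lmul ℂ (CliffordAlgebra (cliffordQ m))).toRingHom
  have : Nonempty (Fin m) := ⟨⟨0, hm⟩⟩
  exact monogenic_fischer_general hγ P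
end
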